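/- Let p ≥ 2 be an integer. There exists a nonzero real polynomial u of degree at most p such that ∫_{−1}^{1} (I_{p−1}u)(x)² dx = (2 + 4/(2p−3)) ∫_{−1}^{1} u(x)² dx; that is, the L² stability constant 2 + 4/(2p−3) of Gauss–Lobatto interpolation on degree-p polynomials is sharp. -/

import Mathlib

open Polynomial

/-- The `n`-th Legendre polynomial, given by the Rodrigues formula
`P_n(x) = 1/(2^n n!) dⁿ/dxⁿ (x² − 1)ⁿ`, normalized so that `P_n(1) = 1`. -/
noncomputable def legendre (n : ℕ) : Polynomial ℝ :=
  Polynomial.C (1 / (2 ^ n * (n.factorial : ℝ))) *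
    (⇑(Polynomial.derivative (R := ℝ)))^[n] ((Polynomial.X ^ 2 - 1) ^ n)

/-- The polynomial `χ_p(x) = P_{p−1}'(x) (x² − 1)`, whose roots are the `p`
Gauss–Lobatto nodes. -/
noncomputable def lobattoChi (p : ℕ) : Polynomial ℝ :=
  Polynomial.derivative (legendre (p - 1)) * (Polynomial.X ^ 2 - 1)

/-! The difference `P_p - P_{p-2}` is a multiple of `χ_p`, so Gauss–Lobatto interpolation sends
`a P_p + b P_{p-2}` to `(a + b) P_{p-2}`. By orthogonality and `∫ P_n² = 2 / (2n + 1)`, the ratio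
of the squared norms is `(a + b)² / (2p - 3)` over `a² / (2p + 1) + b² / (2p - 3)`; it is maximal
for `a : b = (2p + 1) : (2p - 3)`, where it equals `2 + 4 / (2p - 3)`. -/

section Derivative

variable {R : Type*}

lemma eval_iterate_derivative_pow_eq_zero [CommSemiring R] {q : R[X]} {x : R}
    (hx : q.eval x = 0) {k n : ℕ} (hkn : k < n) : (derivative^[k] (q ^ n)).eval x = 0 := by
  refine eval_eq_zero_of_dvd_of_eval_eq_zero (pow_sub_dvd_iterate_derivative_pow q n k) ?_
  rw [eval_pow, hx, zero_pow (Nat.sub_ne_zero_of_lt hkn)]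

lemma iterate_derivative_X_mul [CommSemiring R] (n : ℕ) (q : R[X]) :
    derivative^[n] (X * q) = X * derivative^[n] q + n • derivative^[n - 1] q := by
  rw [mul_comm, iterate_derivative_mul_X, mul_comm]

lemma derivative_X_sq_sub_one_pow_succ [CommRing R] (n : ℕ) :
    derivative ((X ^ 2 - 1 : R[X]) ^ (n + 1)) = C (2 * (n + 1) : R) * (X * (X ^ 2 - 1) ^ n) := by
  rw [derivative_pow_succ]
  simp only [derivative_sub, derivative_X_sq, derivative_one, map_mul, map_add, map_ofNat,
    map_natCast, map_one]
  ring

lemma iterate_derivative_two_X_sq_sub_one_pow [CommRing R] (n : ℕ) :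
    derivative^[2] ((X ^ 2 - 1 : R[X]) ^ (n + 2)) =
      C (2 * (n + 2) * (2 * n + 3) : R) * (X ^ 2 - 1) ^ (n + 1) +
        C (4 * (n + 2) * (n + 1) : R) * (X ^ 2 - 1) ^ n := by
  rw [Function.iterate_succ_apply, Function.iterate_one, derivative_X_sq_sub_one_pow_succ,
    derivative_C_mul, derivative_mul, derivative_X, derivative_X_sq_sub_one_pow_succ]
  simp only [map_mul, map_add, map_ofNat, map_natCast, map_one]
  push_cast
  ring

lemma iterate_derivative_X_sq_sub_one_pow_mul [CommRing R] (n : ℕ) :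
    derivative^[n + 2] ((X ^ 2 - 1 : R[X]) ^ (n + 1)) * (X ^ 2 - 1) =
      C ((n + 1) * (n + 2) : R) * derivative^[n] ((X ^ 2 - 1 : R[X]) ^ (n + 1)) := by
  set w := (X ^ 2 - 1 : R[X]) ^ (n + 1) with hw
  -- `(X² - 1) w'` is expanded so that Leibniz' rule is only needed for multiplication by `X`.
  have first_order : X * (X * derivative w) - derivative w = C (2 * (n + 1) : R) * (X * w) := by
    rw [hw, derivative_X_sq_sub_one_pow_succ]
    ring
  have lower_term : n • derivative^[n - 1] (derivative w) = n • derivative^[n] w := by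
    cases n with
    | zero => simp only [zero_smul]
    | succ n => rw [Nat.add_sub_cancel, ← Function.iterate_succ_apply derivative]
  have leibniz := congrArg derivative^[n + 1] first_order
  rw [iterate_derivative_sub, iterate_derivative_C_mul, iterate_derivative_X_mul,
    iterate_derivative_X_mul, iterate_derivative_X_mul (n + 1) w, Nat.add_sub_cancel,
    iterate_derivative_X_mul, lower_term, ← Function.iterate_succ_apply derivative,
    ← Function.iterate_succ_apply derivative] at leibniz
  simp only [nsmul_eq_mul, map_mul, map_add, map_ofNat, map_natCast, map_one] at leibniz ⊢
  push_cast at leibniz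
  linear_combination leibniz

lemma degree_X_mul_derivative_sub_natCast_mul_lt [Ring R] {f : R[X]} {n : ℕ}
    (hf : f.natDegree ≤ n) :
    (X * derivative f - (n : R[X]) * f).degree < (n : WithBot ℕ) := by
  rw [degree_lt_iff_coeff_zero]
  intro k hnk
  have coeff_X_mul_derivative : (X * derivative f).coeff k = k * f.coeff k := by
    cases k with
    | zero => simp
    | succ k => rw [coeff_X_mul, coeff_derivative, ← Nat.cast_succ, Nat.cast_comm]
  rw [coeff_sub, coeff_X_mul_derivative, coeff_natCast_mul, ← sub_mul]
  rcases hnk.eq_or_lt with rfl | hlt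
  · rw [sub_self, zero_mul]
  · rw [coeff_eq_zero_of_natDegree_lt (hf.trans_lt hlt), mul_zero]

end Derivative

section Integral

variable {a b : ℝ}

lemma intervalIntegrable_eval_mul_eval (f g : ℝ[X]) :
    IntervalIntegrable (fun x ↦ f.eval x * g.eval x) MeasureTheory.volume a b :=
  (f.continuous.mul g.continuous).intervalIntegrable a b

lemma integral_eval_derivative_mul_eval (f g : ℝ[X]) :
    ∫ x in a..b, (derivative f).eval x * g.eval x =
      f.eval b * g.eval b - f.eval a * g.eval a -
        ∫ x in a..b, f.eval x * (derivative g).eval x := by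
  have h := intervalIntegral.integral_mul_deriv_eq_deriv_mul
    (fun x _ ↦ g.hasDerivAt x) (fun x _ ↦ f.hasDerivAt x)
    ((derivative g).continuous.intervalIntegrable a b)
    ((derivative f).continuous.intervalIntegrable a b)
  simpa only [mul_comm] using h

lemma integral_eval_iterate_derivative_mul_eval {f : ℝ[X]} {n : ℕ}
    (ha : ∀ k < n, (derivative^[k] f).eval a = 0) (hb : ∀ k < n, (derivative^[k] f).eval b = 0)
    (q : ℝ[X]) :
    ∫ x in a..b, (derivative^[n] f).eval x * q.eval x =
      (-1) ^ n * ∫ x in a..b, f.eval x * (derivative^[n] q).eval x := by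
  induction n generalizing q with
  | zero => simp
  | succ n ih =>
    rw [Function.iterate_succ_apply', integral_eval_derivative_mul_eval, ha n n.lt_succ_self,
      hb n n.lt_succ_self, ih (fun k hk ↦ ha k (hk.trans n.lt_succ_self))
        (fun k hk ↦ hb k (hk.trans n.lt_succ_self)), ← Function.iterate_succ_apply derivative]
    ring

-- Orthogonality evaluates `∫ f · X f'` as `n ∫ f²`, because `X f' - n f` has degree below `n`;
-- integration by parts evaluates it in terms of the boundary values.
lemma integral_eval_sq_of_orthogonal {f : ℝ[X]} {n : ℕ} (hf : f.natDegree ≤ n)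
    (orthogonal : ∀ q : ℝ[X], q.degree < n → ∫ x in a..b, f.eval x * q.eval x = 0) :
    (2 * n + 1) * ∫ x in a..b, f.eval x ^ 2 = b * f.eval b ^ 2 - a * f.eval a ^ 2 := by
  have by_orthogonality :
      ∫ x in a..b, f.eval x * (X * derivative f).eval x = n * ∫ x in a..b, f.eval x ^ 2 := by
    have h := orthogonal _ (degree_X_mul_derivative_sub_natCast_mul_lt hf)
    simp only [eval_sub, mul_sub] at h
    rw [intervalIntegral.integral_sub (intervalIntegrable_eval_mul_eval _ _)
      (intervalIntegrable_eval_mul_eval _ _), sub_eq_zero] at h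
    rw [h, ← intervalIntegral.integral_const_mul]
    simp only [eval_mul, eval_natCast, sq, mul_left_comm]
  have by_parts :
      ∫ x in a..b, f.eval x * (X * derivative f).eval x =
        b * f.eval b ^ 2 - a * f.eval a ^ 2 -
          (∫ x in a..b, f.eval x ^ 2 + f.eval x * (X * derivative f).eval x) := by
    calc ∫ x in a..b, f.eval x * (X * derivative f).eval x
        = ∫ x in a..b, (derivative f).eval x * (X * f).eval x := by
          simp only [eval_mul, mul_assoc, mul_comm]
      _ = _ := by
          rw [integral_eval_derivative_mul_eval, derivative_mul, derivative_X, one_mul]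
          simp only [eval_add, eval_mul, eval_X, mul_add, ← sq, mul_left_comm (eval _ f)]
  rw [intervalIntegral.integral_add (Continuous.intervalIntegrable (by fun_prop) a b)
    (intervalIntegrable_eval_mul_eval _ _)] at by_parts
  linarith

end Integral

lemma natDegree_legendre_le (n : ℕ) : (legendre n).natDegree ≤ n := by
  have natDegree_pow_le : ((X ^ 2 - 1 : ℝ[X]) ^ n).natDegree ≤ n * 2 :=
    natDegree_pow_le_of_le n (by compute_degree)
  calc (legendre n).natDegree
      ≤ (derivative^[n] ((X ^ 2 - 1 : ℝ[X]) ^ n)).natDegree := natDegree_C_mul_le _ _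
    _ ≤ ((X ^ 2 - 1 : ℝ[X]) ^ n).natDegree - n := natDegree_iterate_derivative _ _
    _ ≤ n := by omega

lemma degree_legendre_lt {m n : ℕ} (hmn : m < n) : (legendre m).degree < n :=
  degree_le_natDegree.trans_lt (by exact_mod_cast (natDegree_legendre_le m).trans_lt hmn)

lemma integral_legendre_mul_eq_zero_of_degree_lt {n : ℕ} {q : ℝ[X]} (hq : q.degree < n) :
    ∫ x in (-1 : ℝ)..1, (legendre n).eval x * q.eval x = 0 := by
  simp only [legendre, eval_mul, eval_C, mul_assoc]
  rw [intervalIntegral.integral_const_mul, integral_eval_iterate_derivative_mul_eval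
      (fun k hk ↦ eval_iterate_derivative_pow_eq_zero (by simp) hk)
      (fun k hk ↦ eval_iterate_derivative_pow_eq_zero (by simp) hk),
    iterate_derivative_eq_zero_of_degree_lt hq]
  simp

lemma lobattoChi_add_two (n : ℕ) :
    lobattoChi (n + 2) = C ((n + 1) * (n + 2) / (2 ^ (n + 1) * ((n + 1).factorial : ℝ))) *
      derivative^[n] ((X ^ 2 - 1 : ℝ[X]) ^ (n + 1)) := by
  rw [lobattoChi, Nat.add_succ_sub_one, legendre, derivative_C_mul,
    ← Function.iterate_succ_apply' derivative, mul_assoc, iterate_derivative_X_sq_sub_one_pow_mul,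
    ← mul_assoc, ← C_mul, one_div_mul_eq_div]

lemma legendre_add_two (n : ℕ) :
    legendre (n + 2) =
      legendre n + C ((2 * n + 3) / ((n + 1) * (n + 2)) : ℝ) * lobattoChi (n + 2) := by
  have factorial_ne_zero : (n.factorial : ℝ) ≠ 0 := by positivity
  rw [lobattoChi_add_two, legendre, legendre, Function.iterate_add_apply,
    iterate_derivative_two_X_sq_sub_one_pow, iterate_map_add, iterate_derivative_C_mul,
    iterate_derivative_C_mul, mul_add, add_comm]
  simp only [← mul_assoc, ← C_mul, Nat.factorial_succ]
  push_cast
  congr 3 <;> field_simp <;> ring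

lemma eval_legendre_of_sq_eq_one (n : ℕ) {x : ℝ} (hx : x ^ 2 = 1) :
    (legendre n).eval x = x ^ n := by
  induction n using Nat.twoStepInduction with
  | zero => simp [legendre]
  | one => simp [legendre, one_add_one_eq_two]
  | more n ih _ =>
    have eval_lobattoChi : (lobattoChi (n + 2)).eval x = 0 := by simp [lobattoChi, hx]
    rw [legendre_add_two, eval_add, eval_mul, eval_lobattoChi, mul_zero, add_zero, ih, pow_add, hx,
      mul_one]

lemma integral_legendre_sq (n : ℕ) :
    ∫ x in (-1 : ℝ)..1, (legendre n).eval x ^ 2 = 2 / (2 * n + 1) := by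
  have h := integral_eval_sq_of_orthogonal (natDegree_legendre_le n)
    fun q hq ↦ integral_legendre_mul_eq_zero_of_degree_lt hq
  rw [eval_legendre_of_sq_eq_one n (by norm_num), eval_legendre_of_sq_eq_one n (by norm_num),
    pow_right_comm (-1 : ℝ)] at h
  rw [eq_div_iff (by positivity), mul_comm, h]
  norm_num

lemma integral_sq_legendre_combination {m n : ℕ} (hmn : m < n) (a b : ℝ) :
    ∫ x in (-1 : ℝ)..1, (C a * legendre n + C b * legendre m).eval x ^ 2 =
      a ^ 2 * (2 / (2 * n + 1)) + b ^ 2 * (2 / (2 * m + 1)) := by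
  have orthogonal := integral_legendre_mul_eq_zero_of_degree_lt (degree_legendre_lt hmn)
  have expand : ∀ x : ℝ, (C a * legendre n + C b * legendre m).eval x ^ 2 =
      a ^ 2 * (legendre n).eval x ^ 2 + b ^ 2 * (legendre m).eval x ^ 2 +
        2 * a * b * ((legendre n).eval x * (legendre m).eval x) := by
    intro x
    rw [eval_add, eval_C_mul, eval_C_mul]
    ring
  simp only [expand]
  rw [intervalIntegral.integral_add (Continuous.intervalIntegrable (by fun_prop) _ _)
      (Continuous.intervalIntegrable (by fun_prop) _ _),
    intervalIntegral.integral_add (Continuous.intervalIntegrable (by fun_prop) _ _)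
      (Continuous.intervalIntegrable (by fun_prop) _ _)]
  simp only [intervalIntegral.integral_const_mul, integral_legendre_sq, orthogonal, mul_zero,
    add_zero]

lemma eval_legendre_add_two_of_eval_lobattoChi_eq_zero {n : ℕ} {x : ℝ}
    (hx : (lobattoChi (n + 2)).eval x = 0) :
    (legendre (n + 2)).eval x = (legendre n).eval x := by
  rw [legendre_add_two, eval_add, eval_mul, hx, mul_zero, add_zero]

/-- Sharpness of the L² stability constant `2 + 4/(2p−3)`: there is a nonzero
polynomial `u` of degree at most `p` whose Gauss–Lobatto interpolant `v = I_{p−1}u`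
(the polynomial of degree at most `p − 1` agreeing with `u` at the roots of `χ_p`)
satisfies `∫_{−1}^{1} v² = (2 + 4/(2p−3)) ∫_{−1}^{1} u²`. -/
theorem gauss_lobatto_interp_l2_stability_sharp (p : ℕ) (hp : 2 ≤ p) :
    ∃ u v : Polynomial ℝ, u ≠ 0 ∧ u.natDegree ≤ p ∧ v.natDegree ≤ p - 1 ∧
      (∀ x : ℝ, (lobattoChi p).eval x = 0 → v.eval x = u.eval x) ∧
      ∫ x in (-1 : ℝ)..1, v.eval x ^ 2 =
        (2 + 4 / (2 * (p : ℝ) - 3)) * ∫ x in (-1 : ℝ)..1, u.eval x ^ 2 := by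
  obtain ⟨m, rfl⟩ := Nat.exists_eq_add_of_le' hp
  refine ⟨C (2 * m + 5 : ℝ) * legendre (m + 2) + C (2 * m + 1 : ℝ) * legendre m,
    C (4 * m + 6 : ℝ) * legendre m, fun u_eq_zero ↦ ?_, ?_, ?_, fun x hx ↦ ?_, ?_⟩
  · have eval_one := congrArg (eval 1) u_eq_zero
    simp only [eval_add, eval_C_mul, eval_legendre_of_sq_eq_one _ (one_pow 2), one_pow, mul_one,
      eval_zero] at eval_one
    exact absurd eval_one (by positivity)
  · exact natDegree_add_le_of_degree_le
      ((natDegree_C_mul_le _ _).trans (natDegree_legendre_le _))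
      ((natDegree_C_mul_le _ _).trans ((natDegree_legendre_le m).trans (by omega)))
  · exact (natDegree_C_mul_le _ _).trans ((natDegree_legendre_le m).trans (by omega))
  · simp only [eval_add, eval_C_mul, eval_legendre_add_two_of_eval_lobattoChi_eq_zero hx]
    ring
  · rw [integral_sq_legendre_combination (by omega)]
    simp only [eval_C_mul, mul_pow, intervalIntegral.integral_const_mul, integral_legendre_sq]
    push_cast
    rw [show 2 * ((m : ℝ) + 2) - 3 = 2 * m + 1 by ring]
    field_simp
    ring
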